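/- Let Γ be the group of bijections of ℝ³ generated by: translations by all vectors of π·ℤ³, all permutations of the three coordinates, and the map T(φ₁,φ₂,φ₃) = (−φ₁, φ₂−φ₁, φ₃−φ₁). Let A = {φ ∈ ℝ³ : π/2 ≥ φ₁ ≥ φ₂ ≥ φ₃ ≥ 0} and B = {φ ∈ ℝ³ : φ₃ + π/2 ≥ φ₁ ≥ π/2 ≥ φ₂ ≥ φ₃}. Then A ∪ B is a fundamental domain for Γ: every point of ℝ³ lies in the Γ-orbit of some point of A ∪ B, and two points of the topological interior of A ∪ B which lie in the same Γ-orbit are equal. -/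

import Mathlib

/-- The transformation `T(φ₁,φ₂,φ₃) = (−φ₁, φ₂−φ₁, φ₃−φ₁)` as a permutation of `ℝ³`. -/
noncomputable def Tmap : Equiv.Perm (Fin 3 → ℝ) :=
  Function.Involutive.toPerm (fun φ => ![-φ 0, φ 1 - φ 0, φ 2 - φ 0]) (by
    intro φ
    funext i
    fin_cases i <;> simp)

/-- The generators of the group `Γ`: translations by vectors of `π·ℤ³`,
permutations of the three coordinates, and the map `T`. -/
noncomputable def genSet5 : Set (Equiv.Perm (Fin 3 → ℝ)) :=
  {e | (∃ v : Fin 3 → ℝ, (∀ i, ∃ k : ℤ, v i = Real.pi * (k : ℝ)) ∧ e = Equiv.addLeft v)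
      ∨ (∃ σ : Equiv.Perm (Fin 3), e = Equiv.arrowCongr σ (Equiv.refl ℝ))
      ∨ e = Tmap}

/-- The closed simplex `A`. -/
def simplexA : Set (Fin 3 → ℝ) :=
  {φ | Real.pi / 2 ≥ φ 0 ∧ φ 0 ≥ φ 1 ∧ φ 1 ≥ φ 2 ∧ φ 2 ≥ 0}

/-- The closed simplex `B`. -/
def simplexB : Set (Fin 3 → ℝ) :=
  {φ | φ 2 + Real.pi / 2 ≥ φ 0 ∧ φ 0 ≥ Real.pi / 2 ∧ Real.pi / 2 ≥ φ 1 ∧ φ 1 ≥ φ 2}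

/-!
Adding a zeroth angle `0`, a point of `ℝ³` gives four points `0, φ₁, φ₂, φ₃` of the circle `ℝ/πℤ`,
and `Γ` changes them only by relabelling and by a common rotation: `T` is the rotation by `-φ₁`
followed by exchanging the first two labels.

*Covering.* Translations and permutations bring a point to `π ≥ φ₁ ≥ φ₂ ≥ φ₃ ≥ 0`. There `Γ` still
contains the cyclic relabelling of the four points, which rotates the plane of
`(φ₂ - π/2, φ₁ - φ₃ - π/2)` by a quarter turn, and `A ∪ B` is the closed negative quadrant.

*Uniqueness.* For a point of the interior, list the preimage in `ℝ` of the four circle points in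
increasing order as `X : ℤ → ℝ`. Points of one orbit have the same list up to translation and a
shift of the index. Since `X (i + 2) - X i < π/2` exactly when `i` is congruent to `0` or `1`
modulo `4`, that shift is a multiple of `4`, and the two points agree.
-/

open Set
open scoped Pointwise Real

section PeriodicExtension

theorem orderIso_int_apply (e : ℤ ≃o ℤ) (i : ℤ) : e i = i + e 0 := by
  have he : ∀ j, e (j + 1) = e j + 1 := fun j => e.map_succ j
  induction i using Int.induction_on with
  | zero => simp
  | succ i ih => rw [he, ih]; ring
  | pred i ih =>
    have := he (-i - 1)
    rw [sub_add_cancel] at this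
    linarith

theorem exists_eq_comp_add_of_range_eq {α : Type*} [Preorder α] {f g : ℤ → α}
    (hf : StrictMono f) (hg : StrictMono g) (h : range g = range f) :
    ∃ m, ∀ i, g i = f (i + m) := by
  let e : ℤ ≃o ℤ :=
    (hg.orderIso g).trans ((OrderIso.setCongr _ _ h).trans (hf.orderIso f).symm)
  have he (i : ℤ) : f (e i) = g i :=
    congrArg Subtype.val ((hf.orderIso f).apply_symm_apply ⟨g i, h ▸ mem_range_self i⟩)
  exact ⟨e 0, fun i => by rw [← orderIso_int_apply, he]⟩

theorem exists_eq_mul_add_fin (n : ℕ) [NeZero n] (i : ℤ) : ∃ (k : ℤ) (r : Fin n), i = k * n + r :=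
  ⟨_, _, ((Int.divModEquiv n).symm_apply_apply i).symm⟩

variable {α : Type*} [AddCommGroup α] {n : ℕ} [NeZero n] {p : α} {a b : Fin n → α}

/-- The extension of an `n`-tuple `a` to a sequence indexed by `ℤ` that increases by `p` whenever
the index increases by `n`. If `a` represents points of the circle `α/pℤ`, this
lists the preimage of these points in `α`. -/
def periodicExtension (p : α) (a : Fin n → α) (i : ℤ) : α :=
  a (Int.divModEquiv n i).2 + (Int.divModEquiv n i).1 • p

theorem periodicExtension_mul_add (k : ℤ) (r : Fin n) :
    periodicExtension p a (k * n + r) = a r + k • p := by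
  have h : Int.divModEquiv n (k * n + r) = (k, r) := (Int.divModEquiv n).apply_symm_apply (k, r)
  rw [periodicExtension, h]

theorem periodicExtension_natCast (r : Fin n) : periodicExtension p a r = a r := by
  simpa using periodicExtension_mul_add (p := p) (a := a) 0 r

theorem periodicExtension_add_mul (i k : ℤ) :
    periodicExtension p a (i + k * n) = periodicExtension p a i + k • p := by
  obtain ⟨l, r, rfl⟩ := exists_eq_mul_add_fin n i
  rw [add_right_comm, ← add_mul, periodicExtension_mul_add, periodicExtension_mul_add, add_zsmul,
    add_assoc]

theorem preimage_coe_range_eq_range_periodicExtension :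
    ((↑) : α → AddCircle p) ⁻¹' range (fun i => (a i : AddCircle p)) =
      range (periodicExtension p a) := by
  ext t
  constructor
  · rintro ⟨r, hr⟩
    have ht : ((t - a r : α) : AddCircle p) = 0 := by
      rw [AddCircle.coe_sub, ← hr, sub_self]
    obtain ⟨k, hk⟩ := (AddCircle.coe_eq_zero_iff p).1 ht
    exact ⟨k * n + r, by rw [periodicExtension_mul_add, hk, add_sub_cancel]⟩
  · rintro ⟨i, rfl⟩
    exact ⟨(Int.divModEquiv n i).2, by simp [periodicExtension]⟩

variable [LinearOrder α] [IsOrderedAddMonoid α]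

theorem strictMono_periodicExtension (ha : StrictMono a) (hp : ∀ r s, a r < a s + p) :
    StrictMono (periodicExtension p a) := by
  intro i j hij
  obtain ⟨k, r, rfl⟩ := exists_eq_mul_add_fin n i
  obtain ⟨l, s, rfl⟩ := exists_eq_mul_add_fin n j
  have hp_pos : 0 < p := by simpa using hp 0 0
  rw [periodicExtension_mul_add, periodicExtension_mul_add]
  obtain hkl | rfl | hkl := lt_trichotomy k l
  · calc a r + k • p < a s + p + k • p := by gcongr; exact hp r s
      _ = a s + (k + 1) • p := by rw [add_zsmul, one_zsmul]; abel
      _ ≤ a s + l • p := by gcongr; exact hkl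
  · gcongr
    exact ha (by simpa using hij)
  · have hlk : (l + 1) * n ≤ k * n := by gcongr; exact hkl
    have hs : (s : ℤ) < n := mod_cast s.is_lt
    linarith [Int.natCast_nonneg r]

theorem exists_periodicExtension_eq_add (ha : StrictMono a) (hpa : ∀ r s, a r < a s + p)
    (hb : StrictMono b) (hpb : ∀ r s, b r < b s + p) {c : AddCircle p}
    (h : range (fun i => (b i : AddCircle p)) = c +ᵥ range (fun i => (a i : AddCircle p))) :
    ∃ (r : Fin n) (t : α), ∀ i, periodicExtension p b i = t + periodicExtension p a (i + r) := by
  obtain ⟨t, rfl⟩ := QuotientAddGroup.mk_surjective c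
  have hrange : range (periodicExtension p b) = range fun i => t + periodicExtension p a i := by
    rw [range_comp' (t + ·), ← preimage_coe_range_eq_range_periodicExtension,
      ← preimage_coe_range_eq_range_periodicExtension, h]
    ext u
    simp [mem_vadd_set_iff_neg_vadd_mem, neg_add_eq_sub]
  obtain ⟨m, hm⟩ := exists_eq_comp_add_of_range_eq
    ((strictMono_periodicExtension ha hpa).const_add t) (strictMono_periodicExtension hb hpb) hrange
  obtain ⟨k, r, rfl⟩ := exists_eq_mul_add_fin n m
  refine ⟨r, t + k • p, fun i => ?_⟩
  rw [hm, add_comm (k * _), ← add_assoc i, periodicExtension_add_mul]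
  abel

end PeriodicExtension

section Invariant

/-- The set of points `0, φ₁, φ₂, φ₃` of the circle `ℝ/πℤ`. -/
def circlePoints (x : Fin 3 → ℝ) : Set (AddCircle π) :=
  insert 0 (range fun i => (x i : AddCircle π))

theorem circlePoints_eq (x : Fin 3 → ℝ) :
    circlePoints x = {0, (x 0 : AddCircle π), (x 1 : AddCircle π), (x 2 : AddCircle π)} := by
  ext u
  simp [circlePoints, Fin.exists_fin_succ, eq_comm]

theorem circlePoints_add {v : Fin 3 → ℝ} (hv : ∀ i, ∃ k : ℤ, v i = π * k) (x : Fin 3 → ℝ) :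
    circlePoints (v + x) = circlePoints x := by
  have hv_zero (i : Fin 3) : (v i : AddCircle π) = 0 := by
    obtain ⟨k, hk⟩ := hv i
    exact (AddCircle.coe_eq_zero_iff _).2 ⟨k, by rw [hk, zsmul_eq_mul, mul_comm]⟩
  simp [circlePoints, hv_zero]

theorem circlePoints_comp_perm (σ : Equiv.Perm (Fin 3)) (x : Fin 3 → ℝ) :
    circlePoints (x ∘ σ) = circlePoints x :=
  congrArg (insert 0) (σ.surjective.range_comp fun i => (x i : AddCircle π))

theorem Tmap_apply (x : Fin 3 → ℝ) : Tmap x = ![-x 0, x 1 - x 0, x 2 - x 0] := rfl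

theorem circlePoints_Tmap (x : Fin 3 → ℝ) :
    circlePoints (Tmap x) = (-(x 0 : AddCircle π)) +ᵥ circlePoints x := by
  simp [circlePoints_eq, Tmap_apply, vadd_set_insert, insert_comm, sub_eq_neg_add]

theorem exists_circlePoints_eq_vadd {g : Equiv.Perm (Fin 3 → ℝ)}
    (hg : g ∈ Subgroup.closure genSet5) (x : Fin 3 → ℝ) :
    ∃ c : AddCircle π, circlePoints (g x) = c +ᵥ circlePoints x := by
  induction hg using Subgroup.closure_induction generalizing x with
  | mem g hg =>
    obtain ⟨v, hv, rfl⟩ | ⟨σ, rfl⟩ | rfl := hg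
    · exact ⟨0, by rw [zero_vadd]; exact circlePoints_add hv x⟩
    · exact ⟨0, by rw [zero_vadd]; exact circlePoints_comp_perm σ.symm x⟩
    · exact ⟨_, circlePoints_Tmap x⟩
  | one => exact ⟨0, (zero_vadd _ _).symm⟩
  | mul g h _ _ ihg ihh =>
    obtain ⟨c, hc⟩ := ihg (h x)
    obtain ⟨d, hd⟩ := ihh x
    exact ⟨c + d, by rw [add_vadd, ← hd, ← hc, Equiv.Perm.mul_apply]⟩
  | inv g _ ih =>
    obtain ⟨c, hc⟩ := ih (g⁻¹ x)
    rw [← Equiv.Perm.mul_apply, mul_inv_cancel, Equiv.Perm.one_apply] at hc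
    exact ⟨-c, by rw [hc, neg_vadd_vadd]⟩

end Invariant

section Domain

theorem simplexA_union_simplexB :
    simplexA ∪ simplexB =
      {x | 0 ≤ x 2 ∧ x 2 ≤ x 1 ∧ x 1 ≤ x 0 ∧ x 1 ≤ π / 2 ∧ x 0 - x 2 ≤ π / 2} := by
  ext x
  simp only [simplexA, simplexB, mem_union, mem_ofPred_eq]
  constructor
  · rintro (⟨h₁, h₂, h₃, h₄⟩ | ⟨h₁, h₂, h₃, h₄⟩) <;> refine ⟨?_, ?_, ?_, ?_, ?_⟩ <;> linarith
  · rintro ⟨h₁, h₂, h₃, h₄, h₅⟩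
    obtain h | h := le_total (x 0) (π / 2)
    · exact Or.inl ⟨h, h₃, h₂, h₁⟩
    · exact Or.inr ⟨by linarith, h, h₄, h₂⟩

theorem vec_mem_simplexA_union_simplexB {a b c : ℝ} (hc : 0 ≤ c) (hcb : c ≤ b) (hba : b ≤ a)
    (hb : b ≤ π / 2) (hac : a - c ≤ π / 2) : ![a, b, c] ∈ simplexA ∪ simplexB :=
  simplexA_union_simplexB ▸ ⟨hc, hcb, hba, hb, hac⟩

/-- The set cut out by the strict forms of the inequalities in `simplexA_union_simplexB`. It is a
convenient description of the interior of `A ∪ B`. -/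
def openDomain : Set (Fin 3 → ℝ) :=
  {x | 0 < x 2 ∧ x 2 < x 1 ∧ x 1 < x 0 ∧ x 1 < π / 2 ∧ x 0 - x 2 < π / 2}

theorem lt_of_mem_interior_of_forall_le {E : Type*} [AddCommGroup E] [Module ℝ E]
    [TopologicalSpace E] [ContinuousAdd E] [ContinuousSMul ℝ E] {f : E →L[ℝ] ℝ} (hf : f ≠ 0)
    {s : Set E} {c : ℝ} (hs : ∀ z ∈ s, f z ≤ c) {x : E} (hx : x ∈ interior s) : f x < c := by
  have hx' : x ∈ interior (f ⁻¹' Iic c) := interior_mono hs hx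
  rwa [← (f.isOpenMap_of_ne_zero hf).preimage_interior_eq_interior_preimage f.continuous,
    interior_Iic] at hx'

theorem interior_simplexA_union_simplexB_subset :
    interior (simplexA ∪ simplexB) ⊆ openDomain := by
  rw [simplexA_union_simplexB]
  intro x hx
  let coord (i : Fin 3) : (Fin 3 → ℝ) →L[ℝ] ℝ := ContinuousLinearMap.proj i
  have coord_ne_zero (i : Fin 3) : coord i ≠ 0 := fun h => by
    simpa [coord] using congr($h (Pi.single i 1))
  have coord_sub_ne_zero {i j : Fin 3} (hij : i ≠ j) : coord i - coord j ≠ 0 := fun h => by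
    simpa [coord, hij] using congr($h (Pi.single i 1))
  have h₁ : -x 2 < 0 := lt_of_mem_interior_of_forall_le (neg_ne_zero.2 (coord_ne_zero 2))
    (fun z hz => neg_nonpos.2 hz.1) hx
  have h₂ : x 2 - x 1 < 0 := lt_of_mem_interior_of_forall_le (coord_sub_ne_zero (by decide))
    (fun z hz => sub_nonpos.2 hz.2.1) hx
  have h₃ : x 1 - x 0 < 0 := lt_of_mem_interior_of_forall_le (coord_sub_ne_zero (by decide))
    (fun z hz => sub_nonpos.2 hz.2.2.1) hx
  have h₄ : x 1 < π / 2 := lt_of_mem_interior_of_forall_le (coord_ne_zero 1)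
    (fun z hz => hz.2.2.2.1) hx
  have h₅ : x 0 - x 2 < π / 2 := lt_of_mem_interior_of_forall_le (coord_sub_ne_zero (by decide))
    (fun z hz => hz.2.2.2.2) hx
  exact ⟨by linarith, by linarith, by linarith, h₄, h₅⟩

end Domain

section Covering

/-- The element of `Γ` relabelling the circle points `0, φ₁, φ₂, φ₃` cyclically. -/
noncomputable def cyclicRelabelling : Equiv.Perm (Fin 3 → ℝ) :=
  Equiv.addLeft ![π, 0, 0] * Tmap * Equiv.arrowCongr (finRotate 3) (Equiv.refl ℝ)

theorem cyclicRelabelling_apply (x : Fin 3 → ℝ) :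
    cyclicRelabelling x = ![π - x 2, x 0 - x 2, x 1 - x 2] := by
  have hperm : Equiv.arrowCongr (finRotate 3) (Equiv.refl ℝ) x = ![x 2, x 0, x 1] := by
    ext i
    fin_cases i <;> rfl
  simp [cyclicRelabelling, hperm, Tmap_apply, sub_eq_add_neg]

theorem addLeft_mem_closure {v : Fin 3 → ℝ} (hv : ∀ i, ∃ k : ℤ, v i = π * k) :
    Equiv.addLeft v ∈ Subgroup.closure genSet5 :=
  Subgroup.subset_closure (Or.inl ⟨v, hv, rfl⟩)

theorem arrowCongr_mem_closure (σ : Equiv.Perm (Fin 3)) :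
    Equiv.arrowCongr σ (Equiv.refl ℝ) ∈ Subgroup.closure genSet5 :=
  Subgroup.subset_closure (Or.inr (Or.inl ⟨σ, rfl⟩))

theorem Tmap_mem_closure : Tmap ∈ Subgroup.closure genSet5 :=
  Subgroup.subset_closure (Or.inr (Or.inr rfl))

theorem cyclicRelabelling_mem_closure : cyclicRelabelling ∈ Subgroup.closure genSet5 := by
  have hv (i : Fin 3) : ∃ k : ℤ, ![π, 0, 0] i = π * k := by
    fin_cases i
    exacts [⟨1, by simp⟩, ⟨0, by simp⟩, ⟨0, by simp⟩]
  exact mul_mem (mul_mem (addLeft_mem_closure hv) Tmap_mem_closure) (arrowCongr_mem_closure _)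

theorem exists_cyclicRelabelling_pow_mem {x : Fin 3 → ℝ} (hx : Antitone x) (hx_nonneg : 0 ≤ x 2)
    (hx_le : x 0 ≤ π) : ∃ k : ℕ, (cyclicRelabelling ^ k) x ∈ simplexA ∪ simplexB := by
  have h₁₀ : x 1 ≤ x 0 := hx (by decide)
  have h₂₁ : x 2 ≤ x 1 := hx (by decide)
  have hpow_one : (cyclicRelabelling ^ 1) x = ![π - x 2, x 0 - x 2, x 1 - x 2] :=
    cyclicRelabelling_apply x
  have hpow_two : (cyclicRelabelling ^ 2) x = ![π - (x 1 - x 2), π - x 1, x 0 - x 1] := by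
    rw [pow_succ', Equiv.Perm.mul_apply, hpow_one, cyclicRelabelling_apply]
    simp
  have hpow_three : (cyclicRelabelling ^ 3) x = ![π - (x 0 - x 1), π - (x 0 - x 2), π - x 0] := by
    rw [pow_succ', Equiv.Perm.mul_apply, hpow_two, cyclicRelabelling_apply]
    simp [sub_sub]
  obtain h | h := le_total (x 1) (π / 2) <;> obtain h' | h' := le_total (x 0 - x 2) (π / 2)
  · exact ⟨0, by rw [simplexA_union_simplexB]; exact ⟨hx_nonneg, h₂₁, h₁₀, h, h'⟩⟩
  · exact ⟨3, by rw [hpow_three]; apply vec_mem_simplexA_union_simplexB <;> linarith⟩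
  · exact ⟨1, by rw [hpow_one]; apply vec_mem_simplexA_union_simplexB <;> linarith⟩
  · exact ⟨2, by rw [hpow_two]; apply vec_mem_simplexA_union_simplexB <;> linarith⟩

theorem exists_mem_closure_forall_apply_mem_Icc (x : Fin 3 → ℝ) :
    ∃ g ∈ Subgroup.closure genSet5, ∀ i, g x i ∈ Icc 0 π := by
  refine ⟨Equiv.addLeft fun i => π * (-toIcoDiv Real.pi_pos 0 (x i) : ℤ),
    addLeft_mem_closure fun i => ⟨_, rfl⟩, fun i => ?_⟩
  have h := sub_toIcoDiv_zsmul_mem_Ico Real.pi_pos 0 (x i)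
  rw [zero_add] at h
  convert! Ico_subset_Icc_self h using 1
  rw [Equiv.coe_addLeft]
  simp only [Pi.add_apply, Int.cast_neg, zsmul_eq_mul]
  ring

theorem exists_arrowCongr_antitone {n : ℕ} {α : Type*} [LinearOrder α] (x : Fin n → α) :
    ∃ σ : Equiv.Perm (Fin n), Antitone (Equiv.arrowCongr σ (Equiv.refl α) x) :=
  ⟨(Tuple.sort (OrderDual.toDual ∘ x)).symm, Tuple.monotone_sort (OrderDual.toDual ∘ x)⟩

theorem exists_mem_simplexA_union_simplexB (x : Fin 3 → ℝ) :
    ∃ g ∈ Subgroup.closure genSet5, g x ∈ simplexA ∪ simplexB := by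
  obtain ⟨g, hg, hgx⟩ := exists_mem_closure_forall_apply_mem_Icc x
  obtain ⟨σ, hσ⟩ := exists_arrowCongr_antitone (g x)
  obtain ⟨k, hk⟩ := exists_cyclicRelabelling_pow_mem hσ (hgx _).1 (hgx _).2
  exact ⟨cyclicRelabelling ^ k * (Equiv.arrowCongr σ (Equiv.refl ℝ) * g),
    mul_mem (pow_mem cyclicRelabelling_mem_closure k) (mul_mem (arrowCongr_mem_closure σ) hg), hk⟩

end Covering

section Uniqueness

/-- The angles `0, φ₃, φ₂, φ₁`, in increasing order when `φ` lies in `openDomain`. -/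
def sortedAngles (x : Fin 3 → ℝ) : Fin 4 → ℝ := ![0, x 2, x 1, x 0]

theorem range_coe_sortedAngles (x : Fin 3 → ℝ) :
    range (fun i => (sortedAngles x i : AddCircle π)) = circlePoints x := by
  ext u
  simp only [sortedAngles, circlePoints_eq, mem_range, Fin.exists_fin_succ, Matrix.cons_val_zero,
    Matrix.cons_val_succ, Matrix.cons_val_fin_one, exists_const, QuotientAddGroup.mk_zero,
    mem_insert_iff, mem_singleton_iff, eq_comm]
  tauto

variable {x y : Fin 3 → ℝ}

theorem strictMono_sortedAngles (hx : x ∈ openDomain) : StrictMono (sortedAngles x) := by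
  obtain ⟨h₁, h₂, h₃, -, -⟩ := hx
  refine Fin.strictMono_iff_lt_succ.2 fun i => ?_
  fin_cases i <;> simpa [sortedAngles]

theorem sortedAngles_lt_add_pi (hx : x ∈ openDomain) (i j : Fin 4) :
    sortedAngles x i < sortedAngles x j + π := by
  have hmono := (strictMono_sortedAngles hx).monotone
  obtain ⟨-, h₂, -, h₄, h₅⟩ := hx
  calc sortedAngles x i ≤ x 0 := hmono (Fin.le_last i)
    _ < 0 + π := by linarith
    _ ≤ sortedAngles x j + π := by gcongr; exact hmono j.zero_le

theorem sortedAngles_injective : Function.Injective sortedAngles := by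
  intro x y h
  ext i
  fin_cases i
  exacts [congrFun h 3, congrFun h 2, congrFun h 1]

theorem periodicExtension_sortedAngles_add_two_sub (x : Fin 3 → ℝ) (r : Fin 4) :
    periodicExtension π (sortedAngles x) (r + 2) - periodicExtension π (sortedAngles x) r =
      ![x 1, x 0 - x 2, π - x 1, π - (x 0 - x 2)] r := by
  set X := periodicExtension π (sortedAngles x)
  have hX_natCast (s : Fin 4) : X s = sortedAngles x s := periodicExtension_natCast s
  have hX_add (i : ℤ) : X (i + 4) = X i + π := by
    simpa using periodicExtension_add_mul (p := π) (a := sortedAngles x) i 1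
  have h₀ : X 0 = 0 := hX_natCast 0
  have h₁ : X 1 = x 2 := hX_natCast 1
  have h₂ : X 2 = x 1 := hX_natCast 2
  have h₃ : X 3 = x 0 := hX_natCast 3
  have h₄ : X 4 = π := by simpa [h₀] using hX_add 0
  have h₅ : X 5 = x 2 + π := by simpa [h₁] using hX_add 1
  clear_value X
  fin_cases r
  · simp [h₀, h₂]
  · simp [h₁, h₃]
  · simp [h₂, h₄]
  · simp [h₃, h₅]
    ring

theorem periodicExtension_sortedAngles_add_two_sub_lt_iff (hx : x ∈ openDomain) (r : Fin 4) :
    periodicExtension π (sortedAngles x) (r + 2) - periodicExtension π (sortedAngles x) r < π / 2 ↔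
      r = 0 ∨ r = 1 := by
  obtain ⟨-, -, -, h₄, h₅⟩ := hx
  rw [periodicExtension_sortedAngles_add_two_sub]
  fin_cases r
  · simpa using h₄
  · simpa using h₅
  · simpa using (by linarith : π / 2 ≤ π - x 1)
  · simpa using (by linarith : π / 2 ≤ π - (x 0 - x 2))

theorem eq_of_mem_openDomain {c : AddCircle π} (hx : x ∈ openDomain) (hy : y ∈ openDomain)
    (h : circlePoints y = c +ᵥ circlePoints x) : x = y := by
  rw [← range_coe_sortedAngles, ← range_coe_sortedAngles] at h
  obtain ⟨r, t, hr⟩ := exists_periodicExtension_eq_add (strictMono_sortedAngles hx)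
    (sortedAngles_lt_add_pi hx) (strictMono_sortedAngles hy) (sortedAngles_lt_add_pi hy) h
  have gap_x := periodicExtension_sortedAngles_add_two_sub_lt_iff hx
  have gap_y := periodicExtension_sortedAngles_add_two_sub_lt_iff hy
  have hr_zero : r = 0 := by
    have h₀ := (gap_y 0).2 (Or.inl rfl)
    have h₁ := (gap_y 1).2 (Or.inr rfl)
    rw [hr, hr, add_sub_add_left_eq_sub] at h₀ h₁
    obtain rfl | rfl := (gap_x r).1 (by simpa [add_comm] using h₀)
    · rfl
    · exact absurd ((gap_x 2).1 h₁) (by decide)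
  subst hr_zero
  have hy_eq (i : Fin 4) : sortedAngles y i = t + sortedAngles x i := by
    simpa [periodicExtension_natCast] using hr i
  have ht : t = 0 := by simpa [sortedAngles] using (hy_eq 0).symm
  exact sortedAngles_injective (funext fun i => by rw [hy_eq, ht, zero_add])

end Uniqueness

/-- `A ∪ B` is a fundamental domain for the action of `Γ` on `ℝ³`. -/
theorem stmt_5 :
    (∀ x : Fin 3 → ℝ, ∃ g ∈ Subgroup.closure genSet5, g x ∈ simplexA ∪ simplexB) ∧
    (∀ x y : Fin 3 → ℝ, x ∈ interior (simplexA ∪ simplexB) →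
      y ∈ interior (simplexA ∪ simplexB) →
      (∃ g ∈ Subgroup.closure genSet5, g x = y) → x = y) := by
  refine ⟨exists_mem_simplexA_union_simplexB, ?_⟩
  rintro x _ hx hgx ⟨g, hg, rfl⟩
  obtain ⟨c, hc⟩ := exists_circlePoints_eq_vadd hg x
  exact eq_of_mem_openDomain (interior_simplexA_union_simplexB_subset hx)
    (interior_simplexA_union_simplexB_subset hgx) hc
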